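/- Let k be a field and let φ : k[y₁, y₂, y₃] → k[x₁, x₂] be the k-algebra homomorphism determined by φ(y₁) = x₁x₂, φ(y₂) = x₁x₂², φ(y₃) = x₁². Then the kernel of φ is the principal ideal generated by y₂²y₃ − y₁⁴. -/

import Mathlib

open MvPolynomial

/-!
The homomorphism sends each monomial to a monomial, so its kernel is spanned by the differences of
two monomials with the same image. Two exponent vectors have the same image exactly when they
differ by a multiple of `(0, 2, 1) - (4, 0, 0)`. As these two vectors have disjoint supports, the
corresponding difference of monomials is a multiple of some `(y₂²y₃)ᵗ - (y₁⁴)ᵗ`, hence of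
`y₂²y₃ - y₁⁴`.
-/

theorem ker_eq_span_sub_of_map_basis {R M N ι κ : Type*} [Ring R] [AddCommGroup M] [Module R M]
    [AddCommGroup N] [Module R N] (b : Module.Basis ι R M) (c : Module.Basis κ R N)
    (L : M →ₗ[R] N) (m : ι → κ) (hL : ∀ i, L (b i) = c (m i)) :
    LinearMap.ker L = Submodule.span R {x | ∃ i j, m i = m j ∧ b i - b j = x} := by
  set P := Submodule.span R {x | ∃ i j, m i = m j ∧ b i - b j = x}
  apply le_antisymm
  · have factors : (P.mkQ ∘ b).FactorsThrough m := fun i j hij ↦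
      (Submodule.Quotient.eq P).mpr (Submodule.subset_span ⟨i, j, hij, rfl⟩)
    let ψ : N →ₗ[R] M ⧸ P := c.constr ℕ (Function.extend m (P.mkQ ∘ b) 0)
    have mkQ_eq : ψ ∘ₗ L = P.mkQ := b.ext fun i ↦ by
      simp only [ψ, LinearMap.comp_apply, hL, Module.Basis.constr_basis, factors.extend_apply,
        Function.comp_apply]
    calc LinearMap.ker L ≤ LinearMap.ker (ψ ∘ₗ L) := LinearMap.ker_le_ker_comp L ψ
      _ = P := by rw [mkQ_eq, Submodule.ker_mkQ]
  · rw [Submodule.span_le]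
    rintro _ ⟨i, j, hij, rfl⟩
    simp [hL, hij]

section MonomialMap

variable {R σ τ : Type*}

theorem aeval_monomial_one_monomial [CommSemiring R] (a : σ → τ →₀ ℕ) (d : σ →₀ ℕ) (r : R) :
    aeval (fun i ↦ monomial (a i) (1 : R)) (monomial d r) =
      monomial (Finsupp.linearCombination ℕ a d) r := by
  simp only [aeval_monomial, algebraMap_eq, monomial_pow, one_pow, Finsupp.linearCombination_apply,
    monomial_finsupp_sum_index]

variable [CommRing R]

theorem ker_aeval_monomial (a : σ → τ →₀ ℕ) :
    RingHom.ker (aeval fun i ↦ monomial (a i) (1 : R)) =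
      Ideal.span {p | ∃ d e, Finsupp.linearCombination ℕ a d = Finsupp.linearCombination ℕ a e ∧
        monomial d (1 : R) - monomial e 1 = p} := by
  apply le_antisymm
  · intro p hp
    have ker_eq := ker_eq_span_sub_of_map_basis (basisMonomials σ R) (basisMonomials τ R)
      (aeval fun i ↦ monomial (a i) (1 : R)).toLinearMap (Finsupp.linearCombination ℕ a)
      fun d ↦ aeval_monomial_one_monomial a d 1
    exact Submodule.span_le_restrictScalars R (MvPolynomial σ R) _
      (ker_eq.le (LinearMap.mem_ker.mpr hp))
  · rw [Ideal.span_le]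
    rintro _ ⟨d, e, hde, rfl⟩
    rw [SetLike.mem_coe, RingHom.mem_ker, map_sub, aeval_monomial_one_monomial,
      aeval_monomial_one_monomial, hde, sub_self]

-- Here and below, `d + t • v = e + t • u` is `d - e = t • (u - v)` without truncated subtraction.
theorem exists_eq_smul_add_of_disjoint {u v d e : σ →₀ ℕ} {t : ℕ} (huv : Disjoint u v)
    (h : d + t • v = e + t • u) : ∃ c, d = t • u + c ∧ e = t • v + c := by
  have smul_le : t • u ≤ d := fun i ↦ by
    have hi : d i + t * v i = e i + t * u i := DFunLike.congr_fun h i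
    have zero_or_zero : u i = 0 ∨ v i = 0 := by
      simpa [bot_eq_zero] using DFunLike.congr_fun huv.eq_bot i
    change t * u i ≤ d i
    rcases zero_or_zero with hu | hv
    · simp [hu]
    · rw [hv] at hi
      lia
  obtain ⟨c, rfl⟩ := exists_add_of_le smul_le
  refine ⟨c, rfl, add_right_cancel (b := t • u) ?_⟩
  rw [← h]
  abel

theorem monomial_sub_monomial_dvd {u v d e : σ →₀ ℕ} {t : ℕ} (huv : Disjoint u v)
    (h : d + t • v = e + t • u) :
    monomial u (1 : R) - monomial v 1 ∣ monomial d 1 - monomial e 1 := by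
  obtain ⟨c, rfl, rfl⟩ := exists_eq_smul_add_of_disjoint huv h
  have factorization : monomial (t • u + c) (1 : R) - monomial (t • v + c) 1 =
      (monomial u 1 ^ t - monomial v 1 ^ t) * monomial c 1 := by
    simp only [sub_mul, monomial_pow, monomial_mul, one_pow, mul_one]
  rw [factorization]
  exact (sub_dvd_pow_sub_pow _ _ t).mul_right _

theorem ker_aeval_monomial_eq_span_singleton (a : σ → τ →₀ ℕ) {u v : σ →₀ ℕ}
    (huv : Disjoint u v)
    (relation : Finsupp.linearCombination ℕ a u = Finsupp.linearCombination ℕ a v)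
    (generates : ∀ d e, Finsupp.linearCombination ℕ a d = Finsupp.linearCombination ℕ a e →
      ∃ t : ℕ, d + t • v = e + t • u ∨ e + t • v = d + t • u) :
    RingHom.ker (aeval fun i ↦ monomial (a i) (1 : R)) =
      Ideal.span {monomial u (1 : R) - monomial v 1} := by
  rw [ker_aeval_monomial]
  apply le_antisymm
  · rw [Ideal.span_le]
    rintro _ ⟨d, e, hde, rfl⟩
    rw [SetLike.mem_coe, Ideal.mem_span_singleton]
    obtain ⟨t, h | h⟩ := generates d e hde
    · exact monomial_sub_monomial_dvd huv h
    · exact dvd_sub_comm.mp (monomial_sub_monomial_dvd huv h)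
  · exact Ideal.span_mono (Set.singleton_subset_iff.mpr ⟨u, v, relation, rfl⟩)

end MonomialMap

/-- The exponent vectors of the coordinates `x₁x₂`, `x₁x₂²`, `x₁²` of the parametrization; with
indices starting at `0`, the variables `x₁`, `x₂` are `X 0`, `X 1`. -/
noncomputable def surfaceExponent : Fin 3 → Fin 2 →₀ ℕ :=
  ![Finsupp.single 0 1 + Finsupp.single 1 1, Finsupp.single 0 1 + Finsupp.single 1 2,
    Finsupp.single 0 2]

theorem monomial_surfaceExponent (R : Type*) [CommSemiring R] :
    (fun i ↦ monomial (surfaceExponent i) (1 : R)) = ![X 0 * X 1, X 0 * X 1 ^ 2, X 0 ^ 2] := by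
  funext i
  fin_cases i <;> simp [surfaceExponent, X, monomial_mul, monomial_pow]

theorem linearCombination_surfaceExponent_eq_iff {d e : Fin 3 →₀ ℕ} :
    Finsupp.linearCombination ℕ surfaceExponent d =
        Finsupp.linearCombination ℕ surfaceExponent e ↔
      d 0 + d 1 + 2 * d 2 = e 0 + e 1 + 2 * e 2 ∧ d 0 + 2 * d 1 = e 0 + 2 * e 1 := by
  simp [Finsupp.linearCombination_apply, Finsupp.sum_fintype, surfaceExponent, Fin.sum_univ_three,
    Finsupp.ext_iff, Fin.forall_fin_two, mul_comm]

theorem exists_add_smul_eq_of_linearCombination_surfaceExponent_eq {d e : Fin 3 →₀ ℕ}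
    (h : Finsupp.linearCombination ℕ surfaceExponent d =
      Finsupp.linearCombination ℕ surfaceExponent e) :
    ∃ t : ℕ,
      d + t • Finsupp.single 0 4 = e + t • (Finsupp.single 1 2 + Finsupp.single 2 1) ∨
      e + t • Finsupp.single 0 4 = d + t • (Finsupp.single 1 2 + Finsupp.single 2 1) := by
  wlog le : e 2 ≤ d 2 generalizing d e
  · exact (this h.symm (le_of_not_ge le)).imp fun _ ↦ Or.symm
  obtain ⟨h₀, h₁⟩ := linearCombination_surfaceExponent_eq_iff.mp h
  obtain ⟨t, ht⟩ := exists_add_of_le le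
  have hd₀ : d 0 + t * 4 = e 0 := by lia
  have hd₁ : d 1 = e 1 + t * 2 := by lia
  refine ⟨t, .inl ?_⟩
  ext i
  fin_cases i <;> simp [hd₀, hd₁, ht]

theorem stmt_12_general (R : Type*) [CommRing R] :
    RingHom.ker (MvPolynomial.aeval
        (![X 0 * X 1, X 0 * X 1 ^ 2, X 0 ^ 2] : Fin 3 → MvPolynomial (Fin 2) R) :
      MvPolynomial (Fin 3) R →ₐ[R] MvPolynomial (Fin 2) R) =
    Ideal.span {(X 1 : MvPolynomial (Fin 3) R) ^ 2 * X 2 - X 0 ^ 4} := by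
  have disjoint : Disjoint (Finsupp.single 1 2 + Finsupp.single 2 1 : Fin 3 →₀ ℕ)
      (Finsupp.single 0 4) := by
    rw [disjoint_iff, bot_eq_zero]
    ext i
    fin_cases i <;> simp
  have relation : Finsupp.linearCombination ℕ surfaceExponent
        (Finsupp.single 1 2 + Finsupp.single 2 1) =
      Finsupp.linearCombination ℕ surfaceExponent (Finsupp.single 0 4) := by
    rw [linearCombination_surfaceExponent_eq_iff]
    simp
  have binomial : monomial (Finsupp.single 1 2 + Finsupp.single 2 1) (1 : R) -
      monomial (Finsupp.single 0 4) 1 = (X 1 : MvPolynomial (Fin 3) R) ^ 2 * X 2 - X 0 ^ 4 := by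
    simp [X, monomial_mul, monomial_pow]
  rw [← monomial_surfaceExponent, ← binomial]
  exact ker_aeval_monomial_eq_span_singleton surfaceExponent disjoint relation fun _ _ ↦
    exists_add_smul_eq_of_linearCombination_surfaceExponent_eq

/-- Example 2.4 (implicitization): the kernel of the `k`-algebra homomorphism
`k[y₁,y₂,y₃] → k[x₁,x₂]` sending `y₁ ↦ x₁x₂`, `y₂ ↦ x₁x₂²`, `y₃ ↦ x₁²` is the
principal ideal generated by `y₂²y₃ − y₁⁴`. -/
theorem stmt_12 (k : Type*) [Field k] :
    RingHom.ker (MvPolynomial.aeval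
        (![X 0 * X 1, X 0 * X 1 ^ 2, X 0 ^ 2] : Fin 3 → MvPolynomial (Fin 2) k) :
      MvPolynomial (Fin 3) k →ₐ[k] MvPolynomial (Fin 2) k) =
    Ideal.span {(X 1 : MvPolynomial (Fin 3) k) ^ 2 * X 2 - X 0 ^ 4} :=
  stmt_12_general k
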